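/- The intersection of the subalgebras U^{≥0} and U^{<0} (as R-submodules of U) is reduced to scalars: U^{≥0} ∩ U^{<0} = R·1, the image of R under the unit map of U. -/

import Mathlib

open scoped TensorProduct

noncomputable section

/-- The base ring `R = ℂ[[ℏ]]`. -/
abbrev R : Type := PowerSeries ℂ

/-- The formal variable `ℏ ∈ ℂ[[ℏ]]`. -/
def hbar : R := PowerSeries.X

/-- The generators `e_n` of the free algebra. -/
def E (n : ℤ) : FreeAlgebra R ℤ := FreeAlgebra.ι R n

/-- The defining relations of `U_ℏ𝔫₊`:
`e_{m+1}e_n − e_n e_{m+1} − e_m e_{n+1} + e_{n+1}e_m = ℏ(e_m e_n + e_n e_m)`. -/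
inductive ERel : FreeAlgebra R ℤ → FreeAlgebra R ℤ → Prop
  | current (m n : ℤ) :
      ERel (E (m + 1) * E n - E n * E (m + 1) - E m * E (n + 1) + E (n + 1) * E m)
        (hbar • (E m * E n + E n * E m))

/-- `U = U_ℏ𝔫₊`, the quotient of the free `R`-algebra on the `e_n`, `n ∈ ℤ`,
by the two-sided ideal generated by the defining relations. -/
abbrev U : Type := RingQuot ERel

/-- The image of `e_n` in `U`. -/
def e (n : ℤ) : U := RingQuot.mkAlgHom R ERel (E n)

/-- `U^{≥0}`, the `R`-subalgebra of `U` generated by the `e_n` with `n ≥ 0`. -/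
def Uge : Subalgebra R U := Algebra.adjoin R (Set.range fun n : ℕ => e (n : ℤ))

/-- `U^{<0}`, the `R`-subalgebra of `U` generated by the `e_n` with `n < 0`. -/
def Ult : Subalgebra R U := Algebra.adjoin R {x : U | ∃ n : ℤ, n < 0 ∧ x = e n}

/-!
`U` acts on sequences of Laurent polynomials, the generator `e n` by shuffle multiplication with
`x ^ n`: up to nonzero integers, a word `e (w 0) ⋯ e (w (k - 1))` takes the vacuum to the
antisymmetrization of `∏ i, x_i ^ w i * ∏ i < j, (x_i - x_j + ℏ)`.

This map is injective. Modulo `ℏ` the kernel `∏ i < j, (x_i - x_j)` is a Vandermonde determinant,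
which antisymmetrization turns into a symmetrization of `∏ i, x_i ^ w i`, and the letters `e n`
commute. Hence a combination of words killed by the action is divisible by `ℏ` among the words whose
letters have the same range of indices, and it vanishes by Nakayama's lemma.

Elements of `U^{≥0}` create only exponents `≥ 0`. Elements of `U^{<0}` create exponents `≤ k - 2` in
`k` variables, since each variable occurs at most `k - 1` times in the kernel. An antisymmetric
Laurent polynomial in `k > 0` variables with exponents in `[0, k - 2]` is zero by pigeonhole, so an
element of both subalgebras acts on the vacuum as a scalar.
-/

/-- Laurent polynomials over `S` in the variables `x_i`, `i : ι`; exponents are finitely supported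
integer vectors. -/
abbrev MvLaurent (ι S : Type*) [CommRing S] : Type _ := AddMonoidAlgebra S (ι →₀ ℤ)

namespace MvLaurent

section Support

variable {ι κ S : Type*} [CommRing S]

/-- The monomial `x_i ^ n`. -/
def zpowX (i : ι) (n : ℤ) : MvLaurent ι S := .single (Finsupp.single i n) 1

lemma zpowX_add (i : ι) (m n : ℤ) : (zpowX i (m + n) : MvLaurent ι S) = zpowX i m * zpowX i n := by
  simp [zpowX, AddMonoidAlgebra.single_mul_single]

/-- The substitution `x_i ↦ x_{f i}`. -/
def rename (f : ι → κ) : MvLaurent ι S →ₐ[S] MvLaurent κ S :=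
  AddMonoidAlgebra.mapDomainAlgHom S S (Finsupp.mapDomain.addMonoidHom f)

@[simp]
lemma rename_single (f : ι → κ) (m : ι →₀ ℤ) (c : S) :
    rename f (.single m c) = .single (m.mapDomain f) c := by
  simp [rename]

@[simp]
lemma rename_zpowX (f : ι → κ) (i : ι) (n : ℤ) :
    rename f (zpowX i n : MvLaurent ι S) = zpowX (f i) n := by
  simp [zpowX]

lemma rename_rename {μ : Type*} (g : κ → μ) (f : ι → κ) (p : MvLaurent ι S) :
    rename g (rename f p) = rename (g ∘ f) p := by
  induction p using AddMonoidAlgebra.induction_linear with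
  | zero => simp only [map_zero]
  | add p q hp hq => simp only [map_add, hp, hq]
  | single m c => simp only [rename_single, Finsupp.mapDomain_comp]

lemma coeff_rename_mapDomain {f : ι → κ} (hf : f.Injective) (p : MvLaurent ι S) (m : ι →₀ ℤ) :
    (rename f p).coeff (m.mapDomain f) = p.coeff m :=
  Finsupp.mapDomain_apply (Finsupp.mapDomain_injective hf) p.coeff m

lemma coeff_rename_perm (σ : Equiv.Perm ι) (p : MvLaurent ι S) (m : ι →₀ ℤ) :
    (rename σ p).coeff m = p.coeff (m.mapDomain σ.symm) := by
  rw [← coeff_rename_mapDomain σ.injective p, ← Finsupp.mapDomain_comp, σ.self_comp_symm,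
    Finsupp.mapDomain_id]

/-- The Laurent polynomials all of whose exponents lie in `A`. -/
def supportedIn (S : Type*) [CommRing S] (A : Set (ι →₀ ℤ)) : Submodule S (MvLaurent ι S) :=
  (Finsupp.supported S S A).comap (AddMonoidAlgebra.coeffLinearEquiv S).toLinearMap

lemma mem_supportedIn {A : Set (ι →₀ ℤ)} {p : MvLaurent ι S} :
    p ∈ supportedIn S A ↔ ∀ m, p.coeff m ≠ 0 → m ∈ A := by
  simp [supportedIn, Finsupp.mem_supported, Set.subset_def]

lemma single_mem_supportedIn {A : Set (ι →₀ ℤ)} {m : ι →₀ ℤ} (hm : m ∈ A) (c : S) :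
    (.single m c : MvLaurent ι S) ∈ supportedIn S A :=
  Finsupp.single_mem_supported S c hm

lemma supportedIn_mono {A B : Set (ι →₀ ℤ)} (h : A ⊆ B) : supportedIn S A ≤ supportedIn S B :=
  Submodule.comap_mono (Finsupp.supported_mono h)

lemma supportedIn_eq_span (A : Set (ι →₀ ℤ)) :
    supportedIn S A = Submodule.span S ((fun m ↦ .single m 1) '' A) := by
  rw [supportedIn, Submodule.comap_equiv_eq_map_symm, Finsupp.supported_eq_span_single,
    Submodule.map_span, Set.image_image]
  rfl

/-- The exponents all of whose coordinates lie in `I`. -/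
def box (ι : Type*) (I : Set ℤ) : Set (ι →₀ ℤ) := {m | ∀ i, m i ∈ I}

lemma mapsTo_mapDomain_box (σ : Equiv.Perm ι) (I : Set ℤ) :
    Set.MapsTo (Finsupp.mapDomain σ) (box ι I) (box ι I) := by
  intro m hm i
  rw [← Finsupp.equivMapDomain_eq_mapDomain, Finsupp.equivMapDomain_apply]
  exact hm _

open Pointwise in
lemma mul_mem_supportedIn_add {A B : Set (ι →₀ ℤ)} {p q : MvLaurent ι S}
    (hp : p ∈ supportedIn S A) (hq : q ∈ supportedIn S B) : p * q ∈ supportedIn S (A + B) := by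
  classical
  refine mem_supportedIn.2 fun m hm ↦ ?_
  obtain ⟨a, ha, b, hb, rfl⟩ := Finset.mem_add.1 <|
    AddMonoidAlgebra.support_coeff_mul_subset p q (Finsupp.mem_support_iff.2 hm)
  exact Set.add_mem_add (mem_supportedIn.1 hp a (Finsupp.mem_support_iff.1 ha))
    (mem_supportedIn.1 hq b (Finsupp.mem_support_iff.1 hb))

lemma rename_mem_supportedIn {A : Set (ι →₀ ℤ)} {B : Set (κ →₀ ℤ)} {f : ι → κ}
    (h : Set.MapsTo (Finsupp.mapDomain f) A B) {p : MvLaurent ι S} (hp : p ∈ supportedIn S A) :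
    rename f p ∈ supportedIn S B := by
  classical
  refine mem_supportedIn.2 fun m hm ↦ ?_
  obtain ⟨a, ha, rfl⟩ := Finset.mem_image.1 <|
    Finsupp.mapDomain_support (Finsupp.mem_support_iff.2 hm)
  exact h (mem_supportedIn.1 hp a (Finsupp.mem_support_iff.1 ha))

end Support

section Alternation

variable {ι S : Type*} [CommRing S] [Fintype ι] [DecidableEq ι]

/-- The antisymmetrization `∑ σ, sign σ • σ`, without the normalizing factor `1 / |ι|!`. -/
def alternation : MvLaurent ι S →ₗ[S] MvLaurent ι S :=
  ∑ σ : Equiv.Perm ι, Equiv.Perm.sign σ • (rename σ).toLinearMap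

lemma alternation_apply (p : MvLaurent ι S) :
    alternation p = ∑ σ : Equiv.Perm ι, Equiv.Perm.sign σ • rename σ p := by
  simp [alternation, LinearMap.sum_apply]

/-- The submodule of antisymmetric Laurent polynomials. -/
def antisymmetric (ι S : Type*) [CommRing S] [Fintype ι] [DecidableEq ι] :
    Submodule S (MvLaurent ι S) :=
  ⨅ σ : Equiv.Perm ι, LinearMap.eqLocus (rename σ).toLinearMap (Equiv.Perm.sign σ • .id)

lemma mem_antisymmetric {p : MvLaurent ι S} :
    p ∈ antisymmetric ι S ↔ ∀ σ : Equiv.Perm ι, rename σ p = Equiv.Perm.sign σ • p := by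
  simp [antisymmetric]

lemma alternation_rename (τ : Equiv.Perm ι) (p : MvLaurent ι S) :
    alternation (rename τ p) = Equiv.Perm.sign τ • alternation p := by
  simp only [alternation_apply, rename_rename, Finset.smul_sum, smul_smul]
  refine Fintype.sum_equiv (Equiv.mulRight τ) _ _ fun σ ↦ ?_
  simp [mul_comm, Equiv.Perm.coe_mul, ← mul_assoc]

lemma alternation_mem_antisymmetric (p : MvLaurent ι S) : alternation p ∈ antisymmetric ι S := by
  refine mem_antisymmetric.2 fun τ ↦ ?_
  simp only [alternation_apply, map_sum, Finset.smul_sum, smul_smul]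
  refine Fintype.sum_equiv (Equiv.mulLeft τ) _ _ fun σ ↦ ?_
  simp [Units.smul_def, rename_rename, ← mul_assoc]

lemma alternation_eq_zero_of_rename_swap {i j : ι} (hij : i ≠ j) {p : MvLaurent ι S}
    (hp : rename (Equiv.swap i j) p = p) : alternation p = 0 := by
  rw [alternation_apply]
  refine Finset.sum_involution (fun σ _ ↦ σ * Equiv.swap i j) (fun σ _ ↦ ?_) (fun σ _ _ h ↦ ?_)
    (fun _ _ ↦ Finset.mem_univ _) (fun σ _ ↦ by simp [mul_assoc])
  · rw [Equiv.Perm.coe_mul, ← rename_rename, hp]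
    simp [Equiv.Perm.sign_swap hij]
  · exact hij (Equiv.swap_eq_one_iff.1 (mul_eq_left.1 h))

lemma alternation_mem_supportedIn {A : Set (ι →₀ ℤ)}
    (hA : ∀ σ : Equiv.Perm ι, Set.MapsTo (Finsupp.mapDomain σ) A A) {p : MvLaurent ι S}
    (hp : p ∈ supportedIn S A) : alternation p ∈ supportedIn S A := by
  rw [alternation_apply]
  exact sum_mem fun σ _ ↦ Submodule.smul_of_tower_mem _ _ (rename_mem_supportedIn (hA σ) hp)

end Alternation

section Shuffle

open scoped Nat

variable {ι κ S : Type*} [CommRing S]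

/-- The factor `x_i - x_j + h`, through which a letter in position `i` is moved past a later
letter in position `j`. -/
def factor (h : S) (i j : ι) : MvLaurent ι S := zpowX i 1 - zpowX j 1 + algebraMap S _ h

@[simp]
lemma rename_factor (f : ι → κ) (h : S) (i j : ι) :
    rename f (factor h i j) = factor h (f i) (f j) := by
  simp [factor, -AddMonoidAlgebra.coe_algebraMap]

/-- The product of the factors relating the first variable to all the others. -/
def crossing (h : S) (k : ℕ) : MvLaurent (Fin (k + 1)) S := ∏ j : Fin k, factor h 0 j.succ

/-- The shuffle kernel `∏_{i < j} (x_i - x_j + h)`. -/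
def shuffleKernel (h : S) (k : ℕ) : MvLaurent (Fin k) S :=
  ∏ i : Fin k, ∏ j ∈ Finset.Ioi i, factor h i j

lemma shuffleKernel_succ (h : S) (k : ℕ) :
    shuffleKernel h (k + 1) = crossing h k * rename Fin.succ (shuffleKernel h k) := by
  simp [shuffleKernel, crossing, Fin.prod_univ_succ, Fin.prod_Ioi_succ]

/-- The shuffle product of `x ^ n` with a Laurent polynomial in `k` variables. -/
def insertLeft (h : S) (n : ℤ) {k : ℕ} : MvLaurent (Fin k) S →ₗ[S] MvLaurent (Fin (k + 1)) S :=
  alternation ∘ₗ LinearMap.mulLeft S (zpowX 0 n * crossing h k) ∘ₗ (rename Fin.succ).toLinearMap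

lemma insertLeft_apply (h : S) (n : ℤ) {k : ℕ} (p : MvLaurent (Fin k) S) :
    insertLeft h n p = alternation (zpowX 0 n * crossing h k * rename Fin.succ p) :=
  rfl

lemma insertLeft_rename (h : S) (n : ℤ) {k : ℕ} (σ : Equiv.Perm (Fin k))
    (p : MvLaurent (Fin k) S) :
    insertLeft h n (rename σ p) = Equiv.Perm.sign σ • insertLeft h n p := by
  set τ := Equiv.Perm.decomposeFin.symm (0, σ)
  have hτ_succ (i : Fin k) : τ i.succ = (σ i).succ := by
    simp [τ, Equiv.Perm.decomposeFin_symm_apply_succ]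
  have hτ_zero : τ 0 = 0 := Equiv.Perm.decomposeFin_symm_apply_zero 0 σ
  have hτ_crossing : rename τ (crossing h k) = crossing h k := by
    simpa [crossing, hτ_succ, hτ_zero] using
      Equiv.prod_comp σ fun j ↦ (factor h 0 j.succ : MvLaurent (Fin (k + 1)) S)
  have hτ : rename Fin.succ (rename σ p) = rename τ (rename Fin.succ p) := by
    rw [rename_rename, rename_rename, (funext hτ_succ : τ ∘ Fin.succ = Fin.succ ∘ σ)]
  have hτ_sign : Equiv.Perm.sign τ = Equiv.Perm.sign σ := by
    simp [τ, Equiv.Perm.decomposeFin.symm_sign]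
  rw [insertLeft_apply, insertLeft_apply, ← hτ_sign, ← alternation_rename, map_mul (rename τ),
    map_mul (rename τ), hτ_crossing, rename_zpowX, hτ_zero, hτ]

lemma insertLeft_alternation (h : S) (n : ℤ) {k : ℕ} (p : MvLaurent (Fin k) S) :
    insertLeft h n (alternation p) = k ! • insertLeft h n p := by
  have hsign (σ : Equiv.Perm (Fin k)) :
      insertLeft h n (Equiv.Perm.sign σ • rename σ p) = insertLeft h n p := by
    rw [Units.smul_def, map_zsmul, insertLeft_rename, Units.smul_def, smul_smul,
      Int.units_coe_mul_self, one_smul]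
  simp only [alternation_apply, map_sum, hsign, Finset.sum_const, Finset.card_univ,
    Fintype.card_perm, Fintype.card_fin]

/-- The factors relating the first two variables to all the others are symmetric in the two. -/
lemma exists_insertLeft_insertLeft (h : S) {k : ℕ} (p : MvLaurent (Fin k) S) :
    ∃ q : MvLaurent (Fin (k + 2)) S, rename (Equiv.swap 0 1) q = q ∧
      ∀ m n : ℤ, insertLeft h m (insertLeft h n p) =
        (k + 1)! • alternation (zpowX 0 m * zpowX 1 n * factor h 0 1 * q) := by
  refine ⟨(∏ j : Fin k, factor h 0 j.succ.succ) * (∏ j : Fin k, factor h 1 j.succ.succ) *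
    rename (Fin.succ ∘ Fin.succ) p, ?_, fun m n ↦ ?_⟩
  · have hswap (j : Fin k) : Equiv.swap (0 : Fin (k + 2)) 1 j.succ.succ = j.succ.succ :=
      Equiv.swap_apply_of_ne_of_ne (Fin.succ_ne_zero _)
        (by simp [Fin.ext_iff])
    have hswap' : Equiv.swap (0 : Fin (k + 2)) 1 ∘ Fin.succ ∘ Fin.succ = Fin.succ ∘ Fin.succ :=
      funext hswap
    simp [rename_rename, hswap, hswap', mul_comm]
  · have hshift : rename Fin.succ (zpowX 0 n * crossing h k * rename Fin.succ p) =
        zpowX 1 n * (∏ j : Fin k, factor h 1 j.succ.succ) * rename (Fin.succ ∘ Fin.succ) p := by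
      rw [map_mul, map_mul, rename_zpowX, rename_rename, crossing, map_prod]
      simp only [rename_factor, Fin.succ_zero_eq_one]
    rw [insertLeft_apply h n, insertLeft_alternation, insertLeft_apply, hshift, crossing,
      Fin.prod_univ_succ, Fin.succ_zero_eq_one]
    refine congrArg (fun q ↦ (k + 1)! • alternation q) ?_
    ring

/-- The relation comes from `((x_0 - x_1) ^ 2 - h ^ 2) (x_0 ^ m x_1 ^ n + x_0 ^ n x_1 ^ m)` being
symmetric in `x_0` and `x_1`. -/
lemma insertLeft_currentRelation (h : S) (m n : ℤ) {k : ℕ} (p : MvLaurent (Fin k) S) :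
    insertLeft h (m + 1) (insertLeft h n p) - insertLeft h n (insertLeft h (m + 1) p) -
        insertLeft h m (insertLeft h (n + 1) p) + insertLeft h (n + 1) (insertLeft h m p) =
      h • (insertLeft h m (insertLeft h n p) + insertLeft h n (insertLeft h m p)) := by
  obtain ⟨q, hq, hinsert⟩ := exists_insertLeft_insertLeft h p
  have hsymm : alternation ((zpowX 0 m * zpowX 1 n + zpowX 0 n * zpowX 1 m) *
      (factor (-h) 0 1 * factor h 0 1 * q)) = 0 := by
    refine alternation_eq_zero_of_rename_swap (Fin.zero_ne_one) ?_
    simp only [map_mul (rename _), map_add (rename _), rename_zpowX, rename_factor, hq,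
      Equiv.swap_apply_left, Equiv.swap_apply_right]
    simp only [factor, map_neg]
    ring
  rw [← sub_eq_zero, ← smul_zero ((k + 1)!), ← hsymm]
  simp only [hinsert, smul_comm h, ← smul_add, ← smul_sub, ← map_smul, ← map_add alternation,
    ← map_sub alternation]
  refine congrArg (fun q ↦ (k + 1)! • alternation q) ?_
  simp only [zpowX_add, factor, map_neg, Algebra.smul_def]
  ring

end Shuffle

section Reduction

variable {ι S T : Type*} [CommRing S] [CommRing T]

/-- Change of coefficients along a ring homomorphism. -/
def map (φ : S →+* T) : MvLaurent ι S →+* MvLaurent ι T := AddMonoidAlgebra.mapRingHom _ φ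

lemma coeff_map (φ : S →+* T) (p : MvLaurent ι S) (m : ι →₀ ℤ) :
    (map φ p).coeff m = φ (p.coeff m) := by
  simp [map]

lemma map_rename (φ : S →+* T) (σ : Equiv.Perm ι) (p : MvLaurent ι S) :
    map φ (rename σ p) = rename σ (map φ p) := by
  ext m
  simp only [coeff_map, coeff_rename_perm]

lemma map_factor (φ : S →+* T) (h : S) (i j : ι) : map φ (factor h i j) = factor (φ h) i j := by
  simp [map, factor, zpowX]

lemma map_shuffleKernel (φ : S →+* T) (h : S) (k : ℕ) :
    map φ (shuffleKernel h k) = shuffleKernel (φ h) k := by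
  simp only [shuffleKernel, map_prod, map_factor]

lemma map_alternation [Fintype ι] [DecidableEq ι] (φ : S →+* T) (p : MvLaurent ι S) :
    map φ (alternation p) = alternation (map φ p) := by
  simp only [alternation_apply, map_sum, Units.smul_def, map_zsmul, map_rename]

lemma zpowX_one_injective [Nontrivial S] :
    Function.Injective fun i ↦ (zpowX i 1 : MvLaurent ι S) :=
  (AddMonoidAlgebra.single_left_injective one_ne_zero).comp
    (Finsupp.single_left_injective one_ne_zero)

lemma shuffleKernel_zero (k : ℕ) :
    shuffleKernel (0 : S) k = (Matrix.vandermonde fun i ↦ -zpowX i 1).det := by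
  simp [shuffleKernel, factor, Matrix.det_vandermonde, neg_add_eq_sub, sub_neg_eq_add]

lemma shuffleKernel_zero_ne_zero [IsDomain S] (k : ℕ) : shuffleKernel (0 : S) k ≠ 0 := by
  rw [shuffleKernel_zero, Matrix.det_vandermonde_ne_zero_iff]
  exact neg_injective.comp zpowX_one_injective

lemma shuffleKernel_zero_mem_antisymmetric (k : ℕ) :
    shuffleKernel (0 : S) k ∈ antisymmetric (Fin k) S := by
  refine mem_antisymmetric.2 fun σ ↦ ?_
  rw [shuffleKernel_zero, AlgHom.map_det, Units.smul_def, zsmul_eq_mul, ← Matrix.det_permute]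
  congr 1
  ext1 i j
  simp [Matrix.vandermonde_apply]

lemma alternation_mul_of_mem_antisymmetric [Fintype ι] [DecidableEq ι] (p : MvLaurent ι S)
    {q : MvLaurent ι S} (hq : q ∈ antisymmetric ι S) :
    alternation (p * q) = (∑ σ : Equiv.Perm ι, rename σ p) * q := by
  rw [alternation_apply, Finset.sum_mul]
  refine Finset.sum_congr rfl fun σ _ ↦ ?_
  rw [map_mul, mem_antisymmetric.1 hq, mul_smul_comm, smul_smul, Int.units_mul_self, one_smul]

lemma sum_rename_eq_zero [IsDomain S] {k : ℕ} {p : MvLaurent (Fin k) S}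
    (hp : alternation (p * shuffleKernel 0 k) = 0) :
    ∑ σ : Equiv.Perm (Fin k), rename σ p = 0 := by
  rw [alternation_mul_of_mem_antisymmetric p (shuffleKernel_zero_mem_antisymmetric k)] at hp
  exact (mul_eq_zero.1 hp).resolve_right (shuffleKernel_zero_ne_zero k)

lemma exists_smul_eq_of_map_eq_zero {h : S} {A : Set (ι →₀ ℤ)} {p : MvLaurent ι S}
    (hpA : p ∈ supportedIn S A) (hp : map (Ideal.Quotient.mk (Ideal.span {h})) p = 0) :
    ∃ q ∈ supportedIn S A, p = h • q := by
  have hdvd (m : ι →₀ ℤ) : h ∣ p.coeff m := by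
    rw [← Ideal.Quotient.eq_zero_iff_dvd, ← coeff_map, hp]
    rfl
  choose d hd using hdvd
  refine ⟨∑ m ∈ p.coeff.support, .single m (d m), sum_mem fun m hm ↦
    single_mem_supportedIn (mem_supportedIn.1 hpA m (Finsupp.mem_support_iff.1 hm)) _, ?_⟩
  simp only [Finset.smul_sum, AddMonoidAlgebra.smul_single, smul_eq_mul, ← hd]
  exact (AddMonoidAlgebra.sum_coeff_single p).symm

lemma exists_sum_rename_eq_smul {h : S} (hh : Prime h) {k : ℕ} {A : Set (Fin k →₀ ℤ)}
    (hA : ∀ σ : Equiv.Perm (Fin k), Set.MapsTo (Finsupp.mapDomain σ) A A)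
    {p : MvLaurent (Fin k) S} (hpA : p ∈ supportedIn S A)
    (hp : alternation (p * shuffleKernel h k) = 0) :
    ∃ q ∈ supportedIn S A, ∑ σ : Equiv.Perm (Fin k), rename σ p = h • q := by
  refine exists_smul_eq_of_map_eq_zero
    (sum_mem fun σ _ ↦ rename_mem_supportedIn (hA σ) hpA) ?_
  have : (Ideal.span {h}).IsPrime := (Ideal.span_singleton_prime hh.ne_zero).2 hh
  simp only [map_sum, map_rename]
  refine sum_rename_eq_zero ?_
  rw [← (Ideal.Quotient.eq_zero_iff_dvd h h).2 dvd_rfl, ← map_shuffleKernel, ← map_mul,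
    ← map_alternation, hp, map_zero]

end Reduction

section Bounds

variable {ι S : Type*} [CommRing S]

open Pointwise in
lemma prod_mem_supportedIn_Icc {α : Type*} (s : Finset α) {p : α → MvLaurent ι S}
    {a b : α → ι →₀ ℤ} (hp : ∀ i ∈ s, p i ∈ supportedIn S (Set.Icc (a i) (b i))) :
    ∏ i ∈ s, p i ∈ supportedIn S (Set.Icc (∑ i ∈ s, a i) (∑ i ∈ s, b i)) := by
  classical
  induction s using Finset.induction_on with
  | empty => exact single_mem_supportedIn (by simp) 1
  | insert i s hi ih =>
    rw [Finset.prod_insert hi, Finset.sum_insert hi, Finset.sum_insert hi]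
    exact supportedIn_mono (Set.Icc_add_Icc_subset _ _ _ _) <| mul_mem_supportedIn_add
      (hp i (Finset.mem_insert_self i s)) (ih fun j hj ↦ hp j (Finset.mem_insert_of_mem hj))

lemma factor_mem_supportedIn (h : S) (i j : ι) :
    factor h i j ∈ supportedIn S (Set.Icc 0 (Finsupp.single i 1 + Finsupp.single j 1)) := by
  have hi (i : ι) : (0 : ι →₀ ℤ) ≤ Finsupp.single i 1 := Finsupp.single_nonneg.2 zero_le_one
  refine add_mem (sub_mem ?_ ?_) ?_
  · exact single_mem_supportedIn (Set.mem_Icc.2 ⟨hi i, le_add_of_nonneg_right (hi j)⟩) 1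
  · exact single_mem_supportedIn (Set.mem_Icc.2 ⟨hi j, le_add_of_nonneg_left (hi i)⟩) 1
  · exact single_mem_supportedIn (Set.mem_Icc.2 ⟨le_rfl, add_nonneg (hi i) (hi j)⟩) h

lemma crossing_mem_supportedIn (h : S) (k : ℕ) :
    crossing h k ∈ supportedIn S {c | 0 ≤ c ∧ c 0 ≤ k ∧ ∀ j : Fin k, c j.succ ≤ 1} := by
  refine supportedIn_mono (fun c hc ↦ ?_)
    (prod_mem_supportedIn_Icc Finset.univ fun j _ ↦ factor_mem_supportedIn h 0 j.succ)
  refine ⟨by simpa using hc.1, (hc.2 0).trans ?_, fun j ↦ (hc.2 j.succ).trans ?_⟩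
  · simp [Finsupp.finsetSum_apply]
  · simp [Finsupp.finsetSum_apply, Finsupp.single_apply, Fin.succ_ne_zero]

lemma insertLeft_mem_supportedIn (h : S) (n : ℤ) {k : ℕ} {p : MvLaurent (Fin k) S}
    {I J : Set ℤ} (hzero : ∀ c : ℤ, 0 ≤ c → c ≤ k → n + c ∈ J)
    (hsucc : ∀ a ∈ I, ∀ c : ℤ, 0 ≤ c → c ≤ 1 → a + c ∈ J) (hp : p ∈ supportedIn S (box _ I)) :
    insertLeft h n p ∈ supportedIn S (box _ J) := by
  have hshift := rename_mem_supportedIn (Set.mapsTo_image (Finsupp.mapDomain Fin.succ) _) hp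
  have hmul := mul_mem_supportedIn_add (mul_mem_supportedIn_add
    (single_mem_supportedIn (Set.mem_singleton (Finsupp.single 0 n)) 1)
    (crossing_mem_supportedIn h k)) hshift
  refine alternation_mem_supportedIn (fun σ ↦ mapsTo_mapDomain_box σ J) (supportedIn_mono ?_ hmul)
  rintro _ ⟨_, ⟨_, rfl, c, ⟨hc, hc_zero, hc_succ⟩, rfl⟩, _, ⟨m, hm, rfl⟩, rfl⟩ i
  cases i using Fin.cases with
  | zero =>
    have hm_zero : m.mapDomain Fin.succ 0 = 0 :=
      Finsupp.mapDomain_of_notMem_range m 0 (by simp)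
    simpa [hm_zero] using hzero (c 0) (hc 0) hc_zero
  | succ j =>
    have hm_succ : m.mapDomain Fin.succ j.succ = m j :=
      Finsupp.mapDomain_apply (Fin.succ_injective k) m j
    simpa [hm_succ, add_comm] using hsucc (m j) (hm j) (c j.succ) (hc j.succ) (hc_succ j)

lemma eq_zero_of_mem_antisymmetric [IsAddTorsionFree S] [Fintype ι] [DecidableEq ι]
    {p : MvLaurent ι S} (hp : p ∈ antisymmetric ι S) {t : Finset ℤ}
    (ht : t.card < Fintype.card ι) (hpt : p ∈ supportedIn S (box ι t)) : p = 0 := by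
  ext m
  by_contra hm
  obtain ⟨i, -, j, -, hij, hmij⟩ := Finset.exists_ne_map_eq_of_card_lt_of_maps_to
    (s := Finset.univ) ht fun i _ ↦ mem_supportedIn.1 hpt m hm i
  have hswap : m.mapDomain (Equiv.swap i j) = m := by
    ext l
    rw [← Finsupp.equivMapDomain_eq_mapDomain, Finsupp.equivMapDomain_apply, Equiv.symm_swap]
    exact Equiv.apply_swap_eq_self hmij l
  have hneg : rename (Equiv.swap i j) p = -p := by
    simp [mem_antisymmetric.1 hp, Equiv.Perm.sign_swap hij]
  refine hm (self_eq_neg.1 ?_)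
  calc p.coeff m = (rename (Equiv.swap i j) p).coeff m := by
        rw [coeff_rename_perm, Equiv.symm_swap, hswap]
    _ = -p.coeff m := by rw [hneg]; simp

end Bounds

end MvLaurent

section Words

open MvLaurent Pointwise

variable {S A : Type*} [CommRing S] [Ring A] [Algebra S A]

lemma list_prod_mem_span_pow {T : Set A} {l : List A} (hl : ∀ a ∈ l, a ∈ T) :
    l.prod ∈ Submodule.span S T ^ l.length := by
  induction l with
  | nil => exact Submodule.one_le.1 le_rfl
  | cons a l ih =>
    rw [List.prod_cons, List.length_cons, pow_succ']
    exact Submodule.mul_mem_mul (Submodule.subset_span (hl a List.mem_cons_self))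
      (ih fun b hb ↦ hl b (List.mem_cons_of_mem a hb))

lemma list_prod_sub_prod_mem_of_perm {T : Set A} {c : S}
    (hT : ∀ a ∈ T, ∀ b ∈ T, a * b - b * a ∈ c • Submodule.span S T ^ 2) {l l' : List A}
    (hll' : l.Perm l') (hl : ∀ a ∈ l, a ∈ T) :
    l.prod - l'.prod ∈ c • Submodule.span S T ^ l.length := by
  induction hll' with
  | nil => simp
  | cons a _ ih =>
    rw [List.prod_cons, List.prod_cons, ← mul_sub, List.length_cons, pow_succ', ← mul_smul_comm]
    exact Submodule.mul_mem_mul (Submodule.subset_span (hl a List.mem_cons_self))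
      (ih fun b hb ↦ hl b (List.mem_cons_of_mem a hb))
  | swap a b l =>
    rw [List.forall_mem_cons, List.forall_mem_cons] at hl
    have hfactor : (b :: a :: l).prod - (a :: b :: l).prod = (b * a - a * b) * l.prod := by
      simp only [List.prod_cons, sub_mul, mul_assoc]
    rw [hfactor, List.length_cons, List.length_cons, add_assoc, add_comm, pow_add,
      ← smul_mul_assoc]
    exact Submodule.mul_mem_mul (hT b hl.1 a hl.2.1) (list_prod_mem_span_pow hl.2.2)
  | trans h₁ _ ih₁ ih₂ =>
    rw [← sub_add_sub_cancel]
    exact add_mem (ih₁ hl) (h₁.length_eq ▸ ih₂ fun a ha ↦ hl a (h₁.mem_iff.2 ha))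

/-- The family `x` satisfies the defining relations of `U_h 𝔫₊`. -/
def CurrentRelation (h : S) (x : ℤ → A) : Prop :=
  ∀ m n, x (m + 1) * x n - x n * x (m + 1) - x m * x (n + 1) + x (n + 1) * x m =
    h • (x m * x n + x n * x m)

/-- The relation equates `[x_{m+1}, x_n]` and `[x_m, x_{n+1}]` modulo `h`; moving the indices past
each other turns `[x_m, x_n]` into `[x_n, x_m]`, so that `2 [x_m, x_n]` vanishes modulo `h`. -/
lemma CurrentRelation.commutator_mem (h_two : IsUnit (2 : S)) {h : S} {x : ℤ → A}
    (hx : CurrentRelation h x) {I : Set ℤ} (hI : I.OrdConnected) {m n : ℤ} (hm : m ∈ I)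
    (hn : n ∈ I) :
    x m * x n - x n * x m ∈ h • Submodule.span S (x '' I) ^ 2 := by
  set B := Submodule.span S (x '' I)
  wlog hmn : m ≤ n generalizing m n
  · rw [← neg_sub]
    exact neg_mem (this hn hm (le_of_not_ge hmn))
  have hmul {a b : ℤ} (ha : a ∈ I) (hb : b ∈ I) : x a * x b ∈ B ^ 2 := by
    rw [pow_two]
    exact Submodule.mul_mem_mul (Submodule.subset_span (Set.mem_image_of_mem x ha))
      (Submodule.subset_span (Set.mem_image_of_mem x hb))
  have hshift (j : ℕ) (hj : m + j ≤ n) :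
      (x (m + j) * x (n - j) - x (n - j) * x (m + j)) - (x m * x n - x n * x m) ∈ h • B ^ 2 := by
    induction j with
    | zero => simp
    | succ j ih =>
      push_cast at hj ⊢
      have ha : m + j ∈ I := hI.out hm hn ⟨by lia, by lia⟩
      have hb : n - (j + 1) ∈ I := hI.out hm hn ⟨by lia, by lia⟩
      have hrel := hx (m + j) (n - (j + 1))
      rw [add_assoc m, (by ring : n - (j + 1 : ℤ) + 1 = n - j)] at hrel
      rw [← sub_add_sub_cancel _ (x (m + j) * x (n - j) - x (n - j) * x (m + j)),
        ← sub_add, hrel]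
      exact add_mem (Submodule.smul_mem_pointwise_smul _ _ _ (add_mem (hmul ha hb) (hmul hb ha)))
        (ih (by lia))
  have hdouble : (2 : S) • (x m * x n - x n * x m) ∈ h • B ^ 2 := by
    have hswap := hshift (n - m).toNat (by lia)
    rw [Int.toNat_of_nonneg (sub_nonneg.2 hmn), add_sub_cancel, sub_sub_cancel] at hswap
    rw [two_smul, ← neg_mem_iff]
    simpa only [neg_add', neg_sub] using hswap
  exact (Submodule.smul_mem_iff_of_isUnit _ h_two).1 hdouble

/-- The linear map sending a monomial `∏ i, x_i ^ w i` to the word `x (w 0) ⋯ x (w (k - 1))`. -/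
def wordMap (S : Type*) [CommRing S] [Algebra S A] (x : ℤ → A) (k : ℕ) :
    MvLaurent (Fin k) S →ₗ[S] A :=
  Finsupp.linearCombination S (fun w : Fin k →₀ ℤ ↦ (List.ofFn fun i ↦ x (w i)).prod) ∘ₗ
    (AddMonoidAlgebra.coeffLinearEquiv S).toLinearMap

lemma wordMap_single (x : ℤ → A) {k : ℕ} (w : Fin k →₀ ℤ) (c : S) :
    wordMap S x k (.single w c) = c • (List.ofFn fun i ↦ x (w i)).prod := by
  simp [wordMap]

lemma map_wordMap_supportedIn (x : ℤ → A) (k : ℕ) (I : Set ℤ) :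
    (supportedIn S (box _ I)).map (wordMap S x k) = Submodule.span S (x '' I) ^ k := by
  rw [supportedIn_eq_span, Submodule.map_span, Set.image_image, Submodule.span_pow]
  congr 1
  ext a
  simp only [wordMap_single, one_smul, Set.mem_image, Set.mem_pow]
  constructor
  · rintro ⟨w, hw, rfl⟩
    exact ⟨fun i ↦ ⟨x (w i), Set.mem_image_of_mem x (hw i)⟩, rfl⟩
  · rintro ⟨f, rfl⟩
    choose w hw hwf using fun i ↦ (f i).2
    exact ⟨Finsupp.equivFunOnFinite.symm w, hw, by simp [hwf]⟩

lemma CurrentRelation.wordMap_rename_sub_mem (h_two : IsUnit (2 : S)) {h : S}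
    {x : ℤ → A} (hx : CurrentRelation h x) {I : Set ℤ} (hI : I.OrdConnected) {k : ℕ}
    (σ : Equiv.Perm (Fin k)) {p : MvLaurent (Fin k) S}
    (hp : p ∈ supportedIn S (box _ I)) :
    wordMap S x k (rename σ p) - wordMap S x k p ∈ h • Submodule.span S (x '' I) ^ k := by
  suffices hle : supportedIn S (box (Fin k) I) ≤
      (h • Submodule.span S (x '' I) ^ k).comap
        (wordMap S x k ∘ₗ (rename σ).toLinearMap - wordMap S x k) from hle hp
  rw [supportedIn_eq_span, Submodule.span_le]
  rintro _ ⟨w, hw, rfl⟩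
  have hcomm : ∀ a ∈ x '' I, ∀ b ∈ x '' I,
      a * b - b * a ∈ h • Submodule.span S (x '' I) ^ 2 := by
    rintro _ ⟨m, hm, rfl⟩ _ ⟨n, hn, rfl⟩
    exact hx.commutator_mem h_two hI hm hn
  have hmem := list_prod_sub_prod_mem_of_perm hcomm
    (Equiv.Perm.ofFn_comp_perm σ.symm fun i ↦ x (w i))
    fun a ha ↦ by
      obtain ⟨i, rfl⟩ := List.mem_ofFn.1 ha
      exact Set.mem_image_of_mem x (hw _)
  rw [List.length_ofFn] at hmem
  refine Submodule.mem_comap.2 ?_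
  simpa [wordMap_single, ← Finsupp.equivMapDomain_eq_mapDomain, Function.comp_def] using hmem

lemma map_wordMap {B : Type*} [Ring B] [Algebra S B] (φ : A →ₐ[S] B) (x : ℤ → A) {k : ℕ}
    (p : MvLaurent (Fin k) S) : φ (wordMap S x k p) = wordMap S (φ ∘ x) k p := by
  induction p using AddMonoidAlgebra.induction_linear with
  | zero => simp only [map_zero]
  | add p q hp hq => simp only [map_add, hp, hq]
  | single w c => simp [wordMap_single, map_list_prod, List.map_ofFn, Function.comp_def]

lemma range_wordMap (x : ℤ → A) (k : ℕ) :
    LinearMap.range (wordMap S x k) = Submodule.span S (Set.range x) ^ k := by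
  have htop : supportedIn S (box (Fin k) Set.univ) = ⊤ :=
    eq_top_iff.2 fun p _ ↦ mem_supportedIn.2 fun m _ i ↦ Set.mem_univ (m i)
  rw [LinearMap.range_eq_map, ← htop, map_wordMap_supportedIn, Set.image_univ]

lemma iSup_range_wordMap (x : ℤ → A) :
    ⨆ k, LinearMap.range (wordMap S x k) =
      Subalgebra.toSubmodule (Algebra.adjoin S (Set.range x)) := by
  rw [Algebra.adjoin_eq_span]
  apply le_antisymm
  · refine iSup_le fun k ↦ ?_
    rw [range_wordMap, Submodule.span_pow]
    exact Submodule.span_mono (Submonoid.pow_subset Submonoid.subset_closure)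
  · refine Submodule.span_le.2 fun a ha ↦ ?_
    obtain ⟨l, hl, rfl⟩ := Submonoid.exists_list_of_mem_closure ha
    refine Submodule.mem_iSup_of_mem l.length ?_
    rw [range_wordMap]
    exact list_prod_mem_span_pow hl

lemma isUnit_natCast (S : Type*) [CommRing S] [Algebra ℚ S] {n : ℕ} (hn : n ≠ 0) :
    IsUnit (n : S) := by
  simpa using (IsUnit.mk0 (n : ℚ) (Nat.cast_ne_zero.2 hn)).map (algebraMap ℚ S)

lemma inf_ker_eq_bot_of_inf_ker_le_smul {M N : Type*} [AddCommGroup M] [AddCommGroup N]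
    [Module S M] [Module S N] [IsNoetherianRing S] {h : S} (hjac : h ∈ Ideal.jacobson (⊥ : Ideal S))
    (hN : IsSMulRegular N h) (f : M →ₗ[S] N) {P : Submodule S M} (hP : P.FG)
    (hle : P ⊓ LinearMap.ker f ≤ h • P) : P ⊓ LinearMap.ker f = ⊥ := by
  have := isNoetherian_of_fg_of_noetherian P hP
  refine Submodule.eq_bot_of_le_smul_of_le_jacobson_bot (Ideal.span {h}) _
    (isNoetherian_submodule.1 this _ inf_le_left) ?_ ((Ideal.span_singleton_le_iff_mem _).2 hjac)
  intro a ha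
  obtain ⟨b, hb, rfl⟩ := hle ha
  have hfb : h • f b = h • 0 := by
    rw [← map_smul, smul_zero]
    exact ha.2
  exact Submodule.smul_mem_smul (Ideal.mem_span_singleton_self h) ⟨hb, hN hfb⟩

/-- If the antisymmetrization of `p` against the kernel vanishes, then so does the symmetrization of
`p` modulo `h`; since the letters commute modulo `h`, the word map takes it to `k!` times the word
of `p`. -/
lemma CurrentRelation.wordMap_mem_smul [Algebra ℚ S] {h : S} (hh : Prime h) {x : ℤ → A}
    (hx : CurrentRelation h x) {I : Set ℤ} (hI : I.OrdConnected) {k : ℕ}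
    {p : MvLaurent (Fin k) S} (hpI : p ∈ supportedIn S (box _ I))
    (hp : alternation (p * shuffleKernel h k) = 0) :
    wordMap S x k p ∈ h • Submodule.span S (x '' I) ^ k := by
  have h_two : IsUnit (2 : S) := mod_cast isUnit_natCast S two_ne_zero
  obtain ⟨q, hqI, hq⟩ := exists_sum_rename_eq_smul hh (fun σ ↦ mapsTo_mapDomain_box σ I) hpI hp
  have hsum : wordMap S x k (∑ σ : Equiv.Perm (Fin k), rename σ p) ∈
      h • Submodule.span S (x '' I) ^ k := by
    rw [hq, map_smul, ← map_wordMap_supportedIn]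
    exact Submodule.smul_mem_pointwise_smul _ _ _ (Submodule.mem_map_of_mem hqI)
  have hdiff : ∑ σ : Equiv.Perm (Fin k), (wordMap S x k (rename σ p) - wordMap S x k p) ∈
      h • Submodule.span S (x '' I) ^ k :=
    sum_mem fun σ _ ↦ hx.wordMap_rename_sub_mem h_two hI σ hpI
  rw [Finset.sum_sub_distrib, ← map_sum, Submodule.sub_mem_iff_right _ hsum, Finset.sum_const,
    Finset.card_univ, ← Nat.cast_smul_eq_nsmul S] at hdiff
  exact (Submodule.smul_mem_iff_of_isUnit _ (isUnit_natCast S Fintype.card_ne_zero)).1 hdiff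

lemma CurrentRelation.wordMap_eq_zero [Algebra ℚ S] [IsDomain S] [IsNoetherianRing S] {h : S}
    (hh : Prime h) (hjac : h ∈ Ideal.jacobson (⊥ : Ideal S)) {x : ℤ → A}
    (hx : CurrentRelation h x) {k : ℕ} (f : A →ₗ[S] MvLaurent (Fin k) S)
    (hf : ∀ p, f (wordMap S x k p) = 0 → alternation (p * shuffleKernel h k) = 0)
    {p : MvLaurent (Fin k) S} (hp : f (wordMap S x k p) = 0) : wordMap S x k p = 0 := by
  obtain ⟨N, hN⟩ : ∃ N : ℤ, p ∈ supportedIn S (box _ (Set.Icc (-N) N)) := by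
    refine ⟨∑ m ∈ p.coeff.support, ∑ i, |m i|, mem_supportedIn.2 fun m hm i ↦ abs_le.1 ?_⟩
    exact (Finset.single_le_sum (f := fun i ↦ |m i|) (fun _ _ ↦ abs_nonneg _)
      (Finset.mem_univ i)).trans <| Finset.single_le_sum (f := fun m : Fin k →₀ ℤ ↦ ∑ i, |m i|)
        (fun _ _ ↦ Finset.sum_nonneg fun _ _ ↦ abs_nonneg _) (Finsupp.mem_support_iff.2 hm)
  set B := Submodule.span S (x '' Set.Icc (-N) N)
  have hB : (B ^ k).FG := (Submodule.fg_span ((Set.finite_Icc _ _).image x)).pow k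
  have hle : B ^ k ⊓ LinearMap.ker f ≤ h • B ^ k := by
    rw [← map_wordMap_supportedIn]
    rintro _ ⟨⟨q, hq, rfl⟩, hfq⟩
    rw [map_wordMap_supportedIn]
    exact hx.wordMap_mem_smul hh Set.ordConnected_Icc hq (hf q hfq)
  have hker := inf_ker_eq_bot_of_inf_ker_le_smul hjac (IsSMulRegular.of_ne_zero hh.ne_zero) f hB hle
  have hmem : wordMap S x k p ∈ B ^ k := by
    rw [← map_wordMap_supportedIn]
    exact Submodule.mem_map_of_mem hN
  exact (Submodule.eq_bot_iff _).1 hker _ ⟨hmem, hp⟩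

lemma apply_mem_of_mem_adjoin {M : Type*} [AddCommGroup M] [Module S M]
    {ρ : A →ₐ[S] Module.End S M} {N : Submodule S M} {s : Set A}
    (hs : ∀ a ∈ s, ∀ v ∈ N, ρ a v ∈ N) {a : A} (ha : a ∈ Algebra.adjoin S s) {v : M}
    (hv : v ∈ N) : ρ a v ∈ N := by
  induction ha using Algebra.adjoin_induction generalizing v with
  | mem a ha => exact hs a ha v hv
  | algebraMap c =>
    rw [AlgHom.commutes, Module.algebraMap_end_apply]
    exact N.smul_mem c hv
  | add a b _ _ iha ihb =>
    rw [map_add]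
    exact add_mem (iha hv) (ihb hv)
  | mul a b _ _ iha ihb =>
    rw [map_mul]
    exact iha (ihb hv)

end Words

/-- The Fock space: sequences of Laurent polynomials, the `k`-th one in `k` variables. -/
abbrev Fock (S : Type*) [CommRing S] : Type _ := ∀ k : ℕ, MvLaurent (Fin k) S

namespace Fock

open MvLaurent
open scoped Nat

variable {S : Type*} [CommRing S]

/-- The action of the generator `x n` on the Fock space by shuffle multiplication with `x ^ n`. -/
def shuffleOp (h : S) (n : ℤ) : Module.End S (Fock S) :=
  LinearMap.pi fun
    | 0 => 0
    | k + 1 => insertLeft h n ∘ₗ LinearMap.proj k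

@[simp]
lemma shuffleOp_zero (h : S) (n : ℤ) (v : Fock S) : shuffleOp h n v 0 = 0 :=
  rfl

@[simp]
lemma shuffleOp_succ (h : S) (n : ℤ) (v : Fock S) (k : ℕ) :
    shuffleOp h n v (k + 1) = insertLeft h n (v k) :=
  rfl

lemma shuffleOp_single (h : S) (n : ℤ) {k : ℕ} (p : MvLaurent (Fin k) S) :
    shuffleOp h n (Pi.single k p) = Pi.single (k + 1) (insertLeft h n p) := by
  ext1 l
  rcases l with - | l
  · simp
  · rcases eq_or_ne l k with rfl | hl
    · simp
    · simp [Pi.single_eq_of_ne, hl]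

lemma currentRelation_shuffleOp (h : S) : CurrentRelation h (shuffleOp h) := by
  intro m n
  refine LinearMap.ext fun v ↦ funext fun k ↦ ?_
  match k with
  | 0 => simp
  | 1 => simp [insertLeft_apply]
  | k + 2 => exact insertLeft_currentRelation h m n (v k)

/-- The vacuum vector: the constant Laurent polynomial `1` in no variables. -/
def vacuum (S : Type*) [CommRing S] : Fock S := Pi.single 0 1

lemma list_prod_shuffleOp_vacuum (h : S) {k : ℕ} (w : Fin k →₀ ℤ) :
    (List.ofFn fun i ↦ shuffleOp h (w i)).prod (vacuum S) =
      Pi.single k ((∏ i ∈ Finset.range k, i !) •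
        alternation (.single w 1 * shuffleKernel h k)) := by
  induction k with
  | zero =>
    simp [vacuum, shuffleKernel, alternation_apply, Subsingleton.elim w 0,
      AddMonoidAlgebra.one_def]
  | succ k ih =>
    have hw : zpowX 0 (w 0) * rename Fin.succ (.single w.tail 1) =
        (.single w 1 : MvLaurent (Fin (k + 1)) S) := by
      have hcons : Finsupp.single 0 (w 0) + w.tail.mapDomain Fin.succ = w := by
        ext i
        cases i using Fin.cases with
        | zero => simp [Finsupp.mapDomain_of_notMem_range]
        | succ i => simp [Finsupp.mapDomain_apply (Fin.succ_injective k), Finsupp.tail_apply]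
      rw [zpowX, rename_single, AddMonoidAlgebra.single_mul_single, mul_one, hcons]
    have htail := ih w.tail
    simp only [Finsupp.tail_apply] at htail
    rw [List.ofFn_succ, List.prod_cons, Module.End.mul_apply, htail, shuffleOp_single, map_nsmul,
      insertLeft_alternation, insertLeft_apply, shuffleKernel_succ, map_mul (rename _), ← hw,
      smul_smul, ← Finset.prod_range_succ]
    refine congrArg (fun q : MvLaurent (Fin (k + 1)) S ↦ (Pi.single (k + 1)
      ((∏ i ∈ Finset.range (k + 1), i !) • alternation q) : Fock S)) ?_
    ring

lemma wordMap_shuffleOp_vacuum (h : S) {k : ℕ} (p : MvLaurent (Fin k) S) :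
    wordMap S (shuffleOp h) k p (vacuum S) =
      Pi.single k ((∏ i ∈ Finset.range k, i !) • alternation (p * shuffleKernel h k)) := by
  induction p using AddMonoidAlgebra.induction_linear with
  | zero => simp
  | add p q hp hq =>
    simp only [map_add, LinearMap.add_apply, hp, hq, add_mul, smul_add, Pi.single_add]
  | single w c =>
    have hc : (.single w c : MvLaurent (Fin k) S) = c • .single w 1 := by simp
    rw [hc, map_smul, LinearMap.smul_apply, wordMap_single, one_smul, list_prod_shuffleOp_vacuum,
      smul_mul_assoc, map_smul, smul_comm _ c]
    exact (Pi.single_smul k c _).symm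

lemma vacuum_mem_pi (N : ∀ k, Submodule S (MvLaurent (Fin k) S)) (h_one : 1 ∈ N 0) :
    vacuum S ∈ Submodule.pi Set.univ N := by
  rintro (- | k) -
  · exact h_one
  · exact zero_mem _

lemma shuffleOp_mem_pi (h : S) {n : ℤ} {N : ∀ k, Submodule S (MvLaurent (Fin k) S)}
    (hN : ∀ k, ∀ p ∈ N k, insertLeft h n p ∈ N (k + 1)) {v : Fock S}
    (hv : v ∈ Submodule.pi Set.univ N) : shuffleOp h n v ∈ Submodule.pi Set.univ N := by
  rintro (- | k) -
  · exact zero_mem _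
  · exact hN k _ (hv k (Set.mem_univ k))

section Module

variable {A : Type*} [Ring A] [Algebra S A] {h : S} {x : ℤ → A}

lemma apply_vacuum_mem {ρ : A →ₐ[S] Module.End S (Fock S)} (hρ : ∀ n, ρ (x n) = shuffleOp h n)
    {I : Set ℤ} {N : ∀ k, Submodule S (MvLaurent (Fin k) S)} (h_one : 1 ∈ N 0)
    (hN : ∀ n ∈ I, ∀ k, ∀ p ∈ N k, insertLeft h n p ∈ N (k + 1)) {a : A}
    (ha : a ∈ Algebra.adjoin S (x '' I)) (k : ℕ) : ρ a (vacuum S) k ∈ N k := by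
  refine apply_mem_of_mem_adjoin (N := Submodule.pi Set.univ N) ?_ ha
    (vacuum_mem_pi N h_one) k (Set.mem_univ k)
  rintro _ ⟨n, hn, rfl⟩ v hv
  rw [hρ]
  exact shuffleOp_mem_pi h (hN n hn) hv

/-- The letters `x n` with `n ≥ 0` create exponents `≥ 0`, those with `n < 0` exponents `≤ k - 2`;
this leaves fewer than `k` exponents for an antisymmetric Laurent polynomial in `k` variables. -/
lemma apply_vacuum_eq_zero [IsAddTorsionFree S] {ρ : A →ₐ[S] Module.End S (Fock S)}
    (hρ : ∀ n, ρ (x n) = shuffleOp h n) {a : A} (hge : a ∈ Algebra.adjoin S (x '' Set.Ici 0))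
    (hlt : a ∈ Algebra.adjoin S (x '' Set.Iio 0)) {k : ℕ} (hk : k ≠ 0) :
    ρ a (vacuum S) k = 0 := by
  have h_anti : ρ a (vacuum S) k ∈ antisymmetric (Fin k) S :=
    apply_vacuum_mem hρ (N := fun k ↦ antisymmetric (Fin k) S)
      (mem_antisymmetric.2 fun σ ↦ by simp [Subsingleton.elim σ 1])
      (fun _ _ _ _ _ ↦ alternation_mem_antisymmetric _) hge k
  have h_one (I : Set ℤ) : (1 : MvLaurent (Fin 0) S) ∈ supportedIn S (box _ I) :=
    mem_supportedIn.2 fun _ _ i ↦ i.elim0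
  have h_lower : ρ a (vacuum S) k ∈ supportedIn S (box _ (Set.Ici 0)) :=
    apply_vacuum_mem hρ (N := fun k ↦ supportedIn S (box (Fin k) (Set.Ici 0))) (h_one _)
      (fun n (hn : 0 ≤ n) k p hp ↦ insertLeft_mem_supportedIn h n
        (fun c hc _ ↦ add_nonneg hn hc) (fun a ha c hc _ ↦ add_nonneg ha hc) hp) hge k
  have h_upper : ρ a (vacuum S) k ∈ supportedIn S (box _ (Set.Iic (k - 2))) :=
    apply_vacuum_mem hρ (N := fun k ↦ supportedIn S (box (Fin k) (Set.Iic (k - 2 : ℤ)))) (h_one _)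
      (fun n (hn : n < 0) k p hp ↦ insertLeft_mem_supportedIn h n
        (fun c _ hc ↦ by grind) (fun a ha c _ hc ↦ by grind) hp) hlt k
  refine eq_zero_of_mem_antisymmetric h_anti (t := Finset.Icc 0 (k - 2 : ℤ)) ?_ ?_
  · simp only [Int.card_Icc, Fintype.card_fin]
    lia
  · refine mem_supportedIn.2 fun m hm i ↦ ?_
    simpa using ⟨mem_supportedIn.1 h_lower m hm i, mem_supportedIn.1 h_upper m hm i⟩

lemma apply_wordMap_vacuum {ρ : A →ₐ[S] Module.End S (Fock S)} (hρ : ∀ n, ρ (x n) = shuffleOp h n)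
    {k : ℕ} (p : MvLaurent (Fin k) S) :
    ρ (wordMap S x k p) (vacuum S) =
      Pi.single k ((∏ i ∈ Finset.range k, i !) • alternation (p * shuffleKernel h k)) := by
  rw [map_wordMap, (funext hρ : ρ ∘ x = shuffleOp h), wordMap_shuffleOp_vacuum]

lemma eq_zero_of_apply_vacuum_eq_zero [Algebra ℚ S] [IsDomain S] [IsNoetherianRing S]
    (hh : Prime h) (hjac : h ∈ Ideal.jacobson (⊥ : Ideal S)) (hx : CurrentRelation h x)
    {ρ : A →ₐ[S] Module.End S (Fock S)} (hρ : ∀ n, ρ (x n) = shuffleOp h n) {a : A}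
    (ha : a ∈ Algebra.adjoin S (Set.range x)) (ha0 : ρ a (vacuum S) = 0) : a = 0 := by
  rw [← Subalgebra.mem_toSubmodule, ← iSup_range_wordMap,
    Submodule.mem_iSup_iff_exists_finsupp] at ha
  obtain ⟨g, hg, rfl⟩ := ha
  refine Finset.sum_eq_zero fun k hk ↦ ?_
  let f (k : ℕ) : A →ₗ[S] MvLaurent (Fin k) S :=
    LinearMap.proj k ∘ₗ LinearMap.applyₗ (vacuum S) ∘ₗ ρ.toLinearMap
  have hf_ne (l : ℕ) (hl : l ≠ k) : f k (g l) = 0 := by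
    obtain ⟨p, hp⟩ := hg l
    simp [f, ← hp, apply_wordMap_vacuum hρ, hl.symm]
  have hf_self : f k (g k) = 0 := by
    rw [← Finset.sum_eq_single_of_mem k hk fun l _ hl ↦ hf_ne l hl, ← map_sum]
    exact congrFun ha0 k
  obtain ⟨p, hp⟩ := hg k
  rw [← hp] at hf_self ⊢
  refine hx.wordMap_eq_zero hh hjac (f k) (fun q hq ↦ ?_) hf_self
  have h_unit : IsUnit ((∏ i ∈ Finset.range k, i ! : ℕ) : S) :=
    isUnit_natCast S (Finset.prod_ne_zero_iff.2 fun i _ ↦ i.factorial_ne_zero)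
  have hq' : (∏ i ∈ Finset.range k, i !) • alternation (q * shuffleKernel h k) = 0 := by
    rw [← Pi.single_eq_same (M := fun k ↦ MvLaurent (Fin k) S) k (_ • _),
      ← apply_wordMap_vacuum hρ]
    exact hq
  rwa [← Nat.cast_smul_eq_nsmul S, h_unit.smul_eq_zero] at hq'

end Module

end Fock

theorem inf_ge_lt_eq_bot_general {S A : Type*} [CommRing S] [IsDomain S] [IsNoetherianRing S]
    [Algebra ℚ S] [Ring A] [Algebra S A] {h : S} (hh : Prime h)
    (hjac : h ∈ Ideal.jacobson (⊥ : Ideal S)) {x : ℤ → A} (hx : CurrentRelation h x)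
    (ρ : A →ₐ[S] Module.End S (Fock S)) (hρ : ∀ n, ρ (x n) = Fock.shuffleOp h n) :
    Algebra.adjoin S (x '' Set.Ici 0) ⊓ Algebra.adjoin S (x '' Set.Iio 0) = ⊥ := by
  have : IsAddTorsionFree S := .of_module_rat S
  refine eq_bot_iff.2 fun a ⟨hge, hlt⟩ ↦ Algebra.mem_bot.2 ?_
  set c : S := (ρ a (Fock.vacuum S) 0).coeff 0
  have ha : a - algebraMap S A c ∈ Algebra.adjoin S (Set.range x) :=
    sub_mem (Algebra.adjoin_mono (Set.image_subset_range x _) hge) (Subalgebra.algebraMap_mem _ c)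
  have hvac : ρ a (Fock.vacuum S) = c • Fock.vacuum S := by
    ext1 k
    rcases eq_or_ne k 0 with rfl | hk
    · refine AddMonoidAlgebra.ext (Finsupp.ext fun m ↦ ?_)
      simp [Fock.vacuum, c, Subsingleton.elim m 0]
    · rw [Fock.apply_vacuum_eq_zero hρ hge hlt hk]
      simp [Fock.vacuum, hk]
  refine ⟨c, (sub_eq_zero.1 <|
    Fock.eq_zero_of_apply_vacuum_eq_zero hh hjac hx hρ ha ?_).symm⟩
  rw [map_sub, AlgHom.commutes, LinearMap.sub_apply, Module.algebraMap_end_apply, hvac, sub_self]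

lemma currentRelation_e : CurrentRelation hbar e := fun m n ↦ by
  simpa [e] using RingQuot.mkAlgHom_rel R (ERel.current m n)

/-- The representation of `U` on the Fock space by shuffle multiplication. -/
def fockRep : U →ₐ[R] Module.End R (Fock R) :=
  RingQuot.liftAlgHom R ⟨FreeAlgebra.lift R (Fock.shuffleOp hbar), by
    rintro _ _ ⟨m, n⟩
    simpa [E] using Fock.currentRelation_shuffleOp hbar m n⟩

lemma fockRep_e (n : ℤ) : fockRep (e n) = Fock.shuffleOp hbar n := by
  simp [fockRep, e, E]

lemma prime_hbar : Prime hbar :=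
  PowerSeries.X_prime

lemma hbar_mem_jacobson : hbar ∈ Ideal.jacobson (⊥ : Ideal R) := by
  rw [IsLocalRing.jacobson_eq_maximalIdeal _ bot_ne_top, IsLocalRing.mem_maximalIdeal,
    mem_nonunits_iff, PowerSeries.isUnit_iff_constantCoeff]
  simp [hbar]

lemma Uge_eq_adjoin_image : Uge = Algebra.adjoin R (e '' Set.Ici 0) := by
  refine congrArg _ (Set.ext fun a ↦ ⟨?_, ?_⟩)
  · rintro ⟨n, rfl⟩
    exact ⟨n, Int.natCast_nonneg n, rfl⟩
  · rintro ⟨n, hn : 0 ≤ n, rfl⟩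
    lift n to ℕ using hn
    exact ⟨n, rfl⟩

lemma Ult_eq_adjoin_image : Ult = Algebra.adjoin R (e '' Set.Iio 0) := by
  simp only [Ult, Set.image, Set.mem_Iio, eq_comm]

/-- the intersection of the subalgebras `U^{≥0}` and `U^{<0}` is reduced
to the scalars `R·1`, i.e. the bottom subalgebra (the image of `R` under the unit map). -/
theorem inf_ge_lt_eq_bot : Uge ⊓ Ult = (⊥ : Subalgebra R U) := by
  rw [Uge_eq_adjoin_image, Ult_eq_adjoin_image]
  exact inf_ge_lt_eq_bot_general (S := R) (A := U) (h := hbar) (x := e) prime_hbar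
    hbar_mem_jacobson currentRelation_e fockRep fockRep_e

end
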